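/- arXiv:1411.4836 — 2 statements merged into one kernel-verified Lean document; each statement's English description precedes it below -/
import Mathlib

section
/- Let W be uniformly distributed on {1,...,M} and independent of a codebook C = (Y^N(1),...,Y^N(M)) of arbitrarily jointly distributed 𝒴^N-valued random vectors. Let Z^N be a 𝒵^N-valued random vector that is conditionally independent of (W, C) given Y^N(W). Then I(W; Z^N, Y^N(1),...,Y^N(M)) ≤ H(Z^N) − H(Z^N | Y^N(W)). -/
open MeasureTheory Finset

/-- Probability that the random variable `X` takes the value `x`. -/
noncomputable def prMass {Ω α : Type*} [MeasurableSpace Ω] (μ : Measure Ω)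
    (X : Ω → α) (x : α) : ℝ :=
  (μ {ω | X ω = x}).toReal

/-- Shannon entropy (in bits) of a random variable with values in a finite alphabet. -/
noncomputable def entropy2 {Ω α : Type*} [MeasurableSpace Ω] [Fintype α]
    (μ : Measure Ω) (X : Ω → α) : ℝ :=
  -∑ x : α, prMass μ X x * Real.logb 2 (prMass μ X x)

/-- Conditional entropy (in bits) `H(X|Y) = H(X,Y) - H(Y)`. -/
noncomputable def condEntropy2 {Ω α β : Type*} [MeasurableSpace Ω] [Fintype α] [Fintype β]
    (μ : Measure Ω) (X : Ω → α) (Y : Ω → β) : ℝ :=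
  entropy2 μ (fun ω => (X ω, Y ω)) - entropy2 μ Y

/-- Mutual information (in bits) `I(X;Y) = H(X) + H(Y) - H(X,Y)`. -/
noncomputable def mutualInfo2 {Ω α β : Type*} [MeasurableSpace Ω] [Fintype α] [Fintype β]
    (μ : Measure Ω) (X : Ω → α) (Y : Ω → β) : ℝ :=
  entropy2 μ X + entropy2 μ Y - entropy2 μ (fun ω => (X ω, Y ω))

/-!
Let `X` be the transmitted codeword. Conditional independence gives `H(Z | W, C) = H(Z | X)` and
independence gives `H(W, C) = H(W) + H(C)`, so `I(W; Z, C) = H(Z, C) - H(C) - H(Z | X)`, which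
subadditivity of entropy bounds by `H(Z) - H(Z | X)`.

A sum of two entropies of functions of `V` is the expectation, over the law of `V`, of `-log` of a
product of masses. Product identities between masses therefore become sum identities between
entropies, and Gibbs' inequality becomes subadditivity.
-/

lemma mul_log_le_mul_log_add_sub {p q : ℝ} (hp : 0 ≤ p) (hq : 0 ≤ q) (hpq : q = 0 → p = 0) :
    p * Real.log q ≤ p * Real.log p + (q - p) := by
  rcases hp.eq_or_lt with rfl | hp
  · simpa using hq
  have hq : 0 < q := hq.lt_of_ne' fun h => hp.ne' (hpq h)
  have hlog : Real.log q - Real.log p ≤ q / p - 1 := by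
    rw [← Real.log_div hq.ne' hp.ne']
    exact Real.log_le_sub_one_of_pos (div_pos hq hp)
  have hmul : p * (q / p - 1) = q - p := by field_simp
  linarith [mul_le_mul_of_nonneg_left hlog hp.le]

lemma sum_mul_logb_le_sum_mul_logb {ι : Type*} {s : Finset ι} {p q : ι → ℝ} {b : ℝ} (hb : 1 < b)
    (hp : ∀ i ∈ s, 0 ≤ p i) (hq : ∀ i ∈ s, 0 ≤ q i) (hpq : ∀ i ∈ s, q i = 0 → p i = 0)
    (hsum : ∑ i ∈ s, q i ≤ ∑ i ∈ s, p i) :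
    ∑ i ∈ s, p i * Real.logb b (q i) ≤ ∑ i ∈ s, p i * Real.logb b (p i) := by
  simp only [Real.logb, ← mul_div_assoc, ← Finset.sum_div]
  refine div_le_div_of_nonneg_right ?_ (Real.log_pos hb).le
  calc ∑ i ∈ s, p i * Real.log (q i)
      ≤ ∑ i ∈ s, (p i * Real.log (p i) + (q i - p i)) := Finset.sum_le_sum fun i hi =>
        mul_log_le_mul_log_add_sub (hp i hi) (hq i hi) (hpq i hi)
    _ = ∑ i ∈ s, p i * Real.log (p i) + (∑ i ∈ s, q i - ∑ i ∈ s, p i) := by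
        rw [Finset.sum_add_distrib, Finset.sum_sub_distrib]
    _ ≤ ∑ i ∈ s, p i * Real.log (p i) := by linarith

section prMass

variable {Ω α β : Type*} [MeasurableSpace Ω] {μ : Measure Ω}

lemma prMass_nonneg (X : Ω → α) (x : α) : 0 ≤ prMass μ X x :=
  ENNReal.toReal_nonneg

lemma prMass_comp_of_injective (X : Ω → α) {f : α → β} (hf : f.Injective) (x : α) :
    prMass μ (fun ω => f (X ω)) (f x) = prMass μ X x := by
  simp only [prMass, hf.eq_iff]

lemma prMass_comp_eq_zero_of_notMem_range (X : Ω → α) {f : α → β} {y : β} (hy : y ∉ Set.range f) :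
    prMass μ (fun ω => f (X ω)) y = 0 := by
  have hempty : {ω | f (X ω) = y} = ∅ :=
    Set.eq_empty_of_forall_notMem fun ω hω => hy ⟨X ω, hω⟩
  rw [prMass, hempty, measure_empty, ENNReal.toReal_zero]

variable [IsFiniteMeasure μ]

lemma prMass_le_prMass_comp (X : Ω → α) (f : α → β) (x : α) :
    prMass μ X x ≤ prMass μ (fun ω => f (X ω)) (f x) :=
  measureReal_mono fun _ hω => congrArg f hω

lemma prMass_eq_zero_of_prMass_comp_eq_zero {X : Ω → α} {f : α → β} {x : α}
    (h : prMass μ (fun ω => f (X ω)) (f x) = 0) : prMass μ X x = 0 :=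
  le_antisymm (h ▸ prMass_le_prMass_comp X f x) (prMass_nonneg X x)

variable [Fintype α] [MeasurableSpace α] [MeasurableSingletonClass α] {X : Ω → α}

lemma prMass_comp_eq_sum [DecidableEq β] (hX : Measurable X) (f : α → β) (y : β) :
    prMass μ (fun ω => f (X ω)) y = ∑ x with f x = y, prMass μ X x := by
  have hfiber : {ω | f (X ω) = y} = X ⁻¹' ↑({x | f x = y} : Finset α) := by
    ext ω
    simp
  rw [prMass, hfiber]
  exact (sum_measureReal_preimage_singleton _ fun x _ => hX (measurableSet_singleton x)).symm

end prMass

lemma sum_prMass {Ω α : Type*} [MeasurableSpace Ω] {μ : Measure Ω} [IsProbabilityMeasure μ]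
    [Fintype α] [MeasurableSpace α] [MeasurableSingletonClass α] {X : Ω → α} (hX : Measurable X) :
    ∑ x, prMass μ X x = 1 := by
  simpa [prMass] using (prMass_comp_eq_sum (μ := μ) hX (fun _ => ()) ()).symm

lemma entropy2_comp_of_injective {Ω α β : Type*} [MeasurableSpace Ω] {μ : Measure Ω}
    [Fintype α] [Fintype β] (X : Ω → α) {f : α → β} (hf : f.Injective) :
    entropy2 μ (fun ω => f (X ω)) = entropy2 μ X := by
  refine congrArg Neg.neg (Fintype.sum_of_injective f hf _ _ (fun y hy => ?_) fun x => ?_).symm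
  · rw [prMass_comp_eq_zero_of_notMem_range X hy, zero_mul]
  · rw [prMass_comp_of_injective X hf]

section entropy2

variable {Ω α β γ : Type*} [MeasurableSpace Ω] {μ : Measure Ω}
  [Fintype α] [MeasurableSpace α] [MeasurableSingletonClass α]
  [Fintype β] [Fintype γ] {X : Ω → α} {Y : Ω → β}

section IsFiniteMeasure

variable [IsFiniteMeasure μ]

lemma entropy2_comp_eq_sum (hX : Measurable X) (f : α → β) :
    entropy2 μ (fun ω => f (X ω))
      = -∑ x, prMass μ X x * Real.logb 2 (prMass μ (fun ω => f (X ω)) (f x)) := by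
  classical
  rw [entropy2, ← Finset.sum_fiberwise Finset.univ f]
  congr 1
  refine Finset.sum_congr rfl fun y _ => ?_
  nth_rewrite 1 [prMass_comp_eq_sum hX f y]
  rw [Finset.sum_mul]
  refine Finset.sum_congr rfl fun x hx => ?_
  rw [(Finset.mem_filter.1 hx).2]

lemma entropy2_comp_add_entropy2_comp_eq_sum (hX : Measurable X) (f : α → β) (g : α → γ) :
    entropy2 μ (fun ω => f (X ω)) + entropy2 μ (fun ω => g (X ω))
      = -∑ x, prMass μ X x * Real.logb 2
          (prMass μ (fun ω => f (X ω)) (f x) * prMass μ (fun ω => g (X ω)) (g x)) := by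
  rw [entropy2_comp_eq_sum hX f, entropy2_comp_eq_sum hX g, ← neg_add, ← Finset.sum_add_distrib]
  congr 1
  refine Finset.sum_congr rfl fun x _ => ?_
  by_cases hx : prMass μ X x = 0
  · simp only [hx, zero_mul, add_zero]
  rw [Real.logb_mul (mt prMass_eq_zero_of_prMass_comp_eq_zero hx)
    (mt prMass_eq_zero_of_prMass_comp_eq_zero hx), mul_add]

variable [MeasurableSpace β] [MeasurableSingletonClass β]

lemma entropy2_prodMk_eq_add_of_indep (hX : Measurable X) (hY : Measurable Y)
    (hindep : ∀ x y, prMass μ (fun ω => (X ω, Y ω)) (x, y) = prMass μ X x * prMass μ Y y) :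
    entropy2 μ (fun ω => (X ω, Y ω)) = entropy2 μ X + entropy2 μ Y := by
  rw [entropy2_comp_add_entropy2_comp_eq_sum (hX.prodMk hY) Prod.fst Prod.snd, entropy2]
  simp only [← hindep]

lemma condEntropy2_comp_eq_of_condIndep (hX : Measurable X) (hY : Measurable Y) (f : β → γ)
    (hcond : ∀ x y,
      prMass μ (fun ω => (X ω, Y ω)) (x, y) * prMass μ (fun ω => f (Y ω)) (f y)
        = prMass μ (fun ω => (X ω, f (Y ω))) (x, f y) * prMass μ Y y) :
    condEntropy2 μ X (fun ω => f (Y ω)) = condEntropy2 μ X Y := by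
  have hXY : Measurable fun ω => (X ω, Y ω) := hX.prodMk hY
  have hsum : entropy2 μ (fun ω => (X ω, Y ω)) + entropy2 μ (fun ω => f (Y ω))
      = entropy2 μ (fun ω => (X ω, f (Y ω))) + entropy2 μ Y := by
    rw [entropy2_comp_add_entropy2_comp_eq_sum hXY (fun v => v) fun v => f v.2,
      entropy2_comp_add_entropy2_comp_eq_sum hXY (fun v => (v.1, f v.2)) Prod.snd]
    simp only [hcond]
  rw [condEntropy2, condEntropy2]
  linarith

end IsFiniteMeasure

lemma entropy2_prodMk_le_add [IsProbabilityMeasure μ]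
    [MeasurableSpace β] [MeasurableSingletonClass β] (hX : Measurable X) (hY : Measurable Y) :
    entropy2 μ (fun ω => (X ω, Y ω)) ≤ entropy2 μ X + entropy2 μ Y := by
  have hXY : Measurable fun ω => (X ω, Y ω) := hX.prodMk hY
  rw [entropy2_comp_add_entropy2_comp_eq_sum hXY Prod.fst Prod.snd, entropy2, neg_le_neg_iff]
  refine sum_mul_logb_le_sum_mul_logb one_lt_two (fun v _ => prMass_nonneg _ v)
    (fun v _ => mul_nonneg (prMass_nonneg X v.1) (prMass_nonneg Y v.2)) (fun v _ hv => ?_)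
    (le_of_eq ?_)
  · rcases mul_eq_zero.1 hv with h | h
    · exact prMass_eq_zero_of_prMass_comp_eq_zero (f := Prod.fst) h
    · exact prMass_eq_zero_of_prMass_comp_eq_zero (f := Prod.snd) h
  · rw [Fintype.sum_prod_type, ← Finset.sum_mul_sum, sum_prMass hX, sum_prMass hY,
      sum_prMass hXY, one_mul]

end entropy2

theorem stmt1_general {Ω 𝒲 𝒞 𝒳 𝒵 : Type*} [MeasurableSpace Ω]
    [Fintype 𝒲] [MeasurableSpace 𝒲] [MeasurableSingletonClass 𝒲]
    [Fintype 𝒞] [MeasurableSpace 𝒞] [MeasurableSingletonClass 𝒞]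
    [Fintype 𝒵] [MeasurableSpace 𝒵] [MeasurableSingletonClass 𝒵] [Fintype 𝒳]
    (μ : Measure Ω) [IsProbabilityMeasure μ] (encode : 𝒲 → 𝒞 → 𝒳)
    {W : Ω → 𝒲} {C : Ω → 𝒞} {Z : Ω → 𝒵}
    (hW : Measurable W) (hC : Measurable C) (hZ : Measurable Z)
    (hindep : ∀ w c, μ {ω | W ω = w ∧ C ω = c} = μ {ω | W ω = w} * μ {ω | C ω = c})
    (hcond : ∀ w c z,
      μ {ω | Z ω = z ∧ W ω = w ∧ C ω = c} * μ {ω | encode (W ω) (C ω) = encode w c}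
        = μ {ω | Z ω = z ∧ encode (W ω) (C ω) = encode w c} * μ {ω | W ω = w ∧ C ω = c}) :
    mutualInfo2 μ W (fun ω => (Z ω, C ω))
      ≤ entropy2 μ Z - condEntropy2 μ Z (fun ω => encode (W ω) (C ω)) := by
  have hWC : entropy2 μ (fun ω => (W ω, C ω)) = entropy2 μ W + entropy2 μ C :=
    entropy2_prodMk_eq_add_of_indep hW hC fun w c => by
      simpa only [prMass, Prod.mk.injEq, ENNReal.toReal_mul] using
        congrArg ENNReal.toReal (hindep w c)
  have hZX : condEntropy2 μ Z (fun ω => encode (W ω) (C ω))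
      = condEntropy2 μ Z (fun ω => (W ω, C ω)) :=
    condEntropy2_comp_eq_of_condIndep hZ (hW.prodMk hC) (fun v => encode v.1 v.2) fun z (w, c) => by
      simpa only [prMass, Prod.mk.injEq, ENNReal.toReal_mul] using
        congrArg ENNReal.toReal (hcond w c z)
  have hswap : entropy2 μ (fun ω => (W ω, Z ω, C ω)) = entropy2 μ (fun ω => (Z ω, W ω, C ω)) :=
    entropy2_comp_of_injective (fun ω => (Z ω, W ω, C ω))
      (f := fun v => (v.2.1, v.1, v.2.2)) fun _ _ => by
        simp +contextual only [Prod.ext_iff, and_self, implies_true]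
  have hZC : entropy2 μ (fun ω => (Z ω, C ω)) ≤ entropy2 μ Z + entropy2 μ C :=
    entropy2_prodMk_le_add hZ hC
  rw [hZX, mutualInfo2, condEntropy2]
  linarith

/-- `I(W; Z^N, Y^N(1),...,Y^N(M)) ≤ H(Z^N) − H(Z^N | Y^N(W))`. -/
theorem stmt1
    {Ω 𝒴 𝒵 : Type*} [MeasurableSpace Ω]
    [Fintype 𝒴] [MeasurableSpace 𝒴] [MeasurableSingletonClass 𝒴]
    [Fintype 𝒵] [MeasurableSpace 𝒵] [MeasurableSingletonClass 𝒵]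
    (μ : Measure Ω) [IsProbabilityMeasure μ]
    (M N : ℕ) (hM : 0 < M) (hN : 0 < N)
    (C : Ω → Fin M → Fin N → 𝒴)   -- the codebook (Y^N(1), ..., Y^N(M))
    (W : Ω → Fin M)               -- the item to be identified
    (Z : Ω → Fin N → 𝒵)           -- the observation
    (hCm : Measurable C) (hWm : Measurable W) (hZm : Measurable Z)
    -- W is uniformly distributed on {1,...,M}
    (hWunif : ∀ w : Fin M, μ {ω | W ω = w} = (M : ENNReal)⁻¹)
    -- W is independent of the codebook
    (hWindep : ∀ (w : Fin M) (c : Fin M → Fin N → 𝒴),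
      μ {ω | W ω = w ∧ C ω = c} = μ {ω | W ω = w} * μ {ω | C ω = c})
    -- Z^N is conditionally independent of (W, C) given Y^N(W)
    (hCI : ∀ (w : Fin M) (c : Fin M → Fin N → 𝒴) (z : Fin N → 𝒵),
      μ {ω | Z ω = z ∧ W ω = w ∧ C ω = c} * μ {ω | C ω (W ω) = c w}
        = μ {ω | Z ω = z ∧ C ω (W ω) = c w} * μ {ω | W ω = w ∧ C ω = c}) :
    mutualInfo2 μ W (fun ω => (Z ω, C ω))
      ≤ entropy2 μ Z - condEntropy2 μ Z (fun ω => C ω (W ω)) :=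
  stmt1_general μ (fun (w : Fin M) (c : Fin M → Fin N → 𝒴) => c w) hWm hCm hZm hWindep hCI
end

section
/- Let V_X > 0, Δ ≥ 0 and V_N > 0. Let X be a Gaussian random variable with mean 0 and variance V_X, set Y = f·X with f = 1 + √(Δ/V_X), let G be a Gaussian random variable with mean 0 and variance V_N independent of X, and set Z = Y + G. Then E[(X − Y)²] = Δ and the mutual information I(Y;Z), defined as the Kullback–Leibler divergence of the joint law of (Y,Z) from the product of its marginals, equals (1/2) ln(1 + (√V_X + √Δ)²/V_N) (in nats). -/
open MeasureTheory ProbabilityTheory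
open scoped Classical

/-- Kullback–Leibler divergence `D(μ‖ν)` in nats: `∫ log(dμ/dν) dμ` when `μ ≪ ν` and
the log-likelihood ratio is `μ`-integrable, and `⊤` otherwise. -/
noncomputable def klDiv' {α : Type*} [MeasurableSpace α] (μ ν : Measure α) : EReal :=
  if μ ≪ ν ∧ Integrable (llr μ ν) μ then ((∫ x, llr μ ν x ∂μ : ℝ) : EReal) else ⊤

/-- Mutual information (in nats) of two real-valued random variables, defined as the
KL divergence of the joint law from the product of the marginal laws. -/
noncomputable def miReal {Ω : Type*} [MeasurableSpace Ω] (μ : Measure Ω)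
    (U V : Ω → ℝ) : EReal :=
  klDiv' (μ.map (fun ω => (U ω, V ω))) ((μ.map U).prod (μ.map V))

/-!
For noise `G` independent of `Y`, the shear `(y, g) ↦ (y, y + g)` preserves the product of any
measure with Lebesgue measure, so the density of the joint law of `(Y, Y + G)` with respect to
`law(Y) ⊗ Lebesgue` is the noise density at `z - y`. Dividing by the density of `Y + G` gives
`I(Y; Y + G) = h(Y + G) - h(G)`, where `h` is differential entropy, and a Gaussian of variance `v`
has `h = (1/2) log(2πev)`.
-/

open scoped ENNReal NNReal

section LogLikelihoodRatio

variable {α β : Type*} [MeasurableSpace α] [MeasurableSpace β]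

lemma toReal_rnDeriv_pos {μ ν : Measure α} [SigmaFinite μ] [SigmaFinite ν] (hμν : μ ≪ ν) :
    ∀ᵐ x ∂μ, 0 < (μ.rnDeriv ν x).toReal := by
  filter_upwards [Measure.rnDeriv_pos hμν, hμν.ae_le (μ.rnDeriv_lt_top ν)] with x hpos hlt
  exact ENNReal.toReal_pos hpos.ne' hlt.ne

lemma llr_add_llr_ae_eq {μ ν κ : Measure α} [SigmaFinite μ] [SigmaFinite ν] [SigmaFinite κ]
    (hμν : μ ≪ ν) (hνκ : ν ≪ κ) :
    (fun x ↦ llr μ ν x + llr ν κ x) =ᵐ[μ] llr μ κ := by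
  filter_upwards [hμν.ae_le (hνκ.ae_le (Measure.rnDeriv_mul_rnDeriv hμν)),
    toReal_rnDeriv_pos hμν, hμν.ae_le (toReal_rnDeriv_pos hνκ)]
    with x hmul hμν_pos hνκ_pos
  rw [llr, llr, llr, ← hmul, Pi.mul_apply, ENNReal.toReal_mul,
    Real.log_mul hμν_pos.ne' hνκ_pos.ne']

lemma llr_map_ae_eq {f : α → β} (hf : MeasurableEmbedding f) (μ ν : Measure α)
    [SigmaFinite μ] [SigmaFinite ν] :
    (fun x ↦ llr (μ.map f) (ν.map f) (f x)) =ᵐ[ν] llr μ ν := by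
  filter_upwards [hf.rnDeriv_map μ ν] with x hx
  rw [llr, llr, hx]

lemma llr_prod_right_ae_eq (ρ : Measure α) {ν κ : Measure β} [SigmaFinite ρ] [SFinite ν]
    [SigmaFinite κ] (hνκ : ν ≪ κ) :
    llr (ρ.prod ν) (ρ.prod κ) =ᵐ[ρ.prod κ] fun z ↦ llr ν κ z.2 := by
  have hdens : ρ.prod ν = (ρ.prod κ).withDensity fun z ↦ ν.rnDeriv κ z.2 := by
    rw [← prod_withDensity_right (ν.measurable_rnDeriv κ), Measure.withDensity_rnDeriv_eq _ _ hνκ]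
  have hrn := Measure.rnDeriv_withDensity (ρ.prod κ)
    ((ν.measurable_rnDeriv κ).comp measurable_snd)
  filter_upwards [hrn] with z hz
  rw [llr, llr, hdens]
  exact congrArg (fun t : ℝ≥0∞ ↦ Real.log t.toReal) hz

lemma absolutelyContinuous_fst_prod_snd {P : Measure (α × β)} [SFinite P]
    {μ : Measure α} {ν : Measure β} [SigmaFinite μ] [SigmaFinite ν] (hP : P ≪ μ.prod ν) :
    P ≪ P.fst.prod P.snd := by
  have hfst : P.fst ≪ μ :=
    (hP.map measurable_fst).trans Measure.quasiMeasurePreserving_fst.absolutelyContinuous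
  have hsnd : P.snd ≪ ν :=
    (hP.map measurable_snd).trans Measure.quasiMeasurePreserving_snd.absolutelyContinuous
  have hdens : P.fst.prod P.snd = (μ.prod ν).withDensity
      fun z ↦ P.fst.rnDeriv μ z.1 * P.snd.rnDeriv ν z.2 := by
    rw [← prod_withDensity (P.fst.measurable_rnDeriv μ) (P.snd.measurable_rnDeriv ν),
      Measure.withDensity_rnDeriv_eq _ _ hfst, Measure.withDensity_rnDeriv_eq _ _ hsnd]
  have hfst_pos : ∀ᵐ z ∂P, 0 < P.fst.rnDeriv μ z.1 :=
    ae_of_ae_map measurable_fst.aemeasurable (Measure.rnDeriv_pos hfst)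
  have hsnd_pos : ∀ᵐ z ∂P, 0 < P.snd.rnDeriv ν z.2 :=
    ae_of_ae_map measurable_snd.aemeasurable (Measure.rnDeriv_pos hsnd)
  refine Measure.AbsolutelyContinuous.mk fun s hs hs_null ↦ ?_
  have hs_dens : ∀ᵐ z ∂μ.prod ν, z ∈ s → P.fst.rnDeriv μ z.1 * P.snd.rnDeriv ν z.2 = 0 := by
    rw [hdens, withDensity_apply _ hs, lintegral_eq_zero_iff (by fun_prop)] at hs_null
    exact (ae_restrict_iff' hs).1 hs_null
  refine measure_eq_zero_iff_ae_notMem.2 ?_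
  filter_upwards [hP.ae_le hs_dens, hfst_pos, hsnd_pos] with z hz hz₁ hz₂ hzs
  exact mul_ne_zero hz₁.ne' hz₂.ne' (hz hzs)

end LogLikelihoodRatio

section AdditiveNoise

variable {Ω E : Type*} [MeasurableSpace Ω] {μ : Measure Ω} [IsFiniteMeasure μ]
  [MeasurableSpace E] [AddGroup E] [MeasurableAdd₂ E] {Y G : Ω → E}

lemma map_prodMk_add_eq_map_prod (hY : AEMeasurable Y μ) (hG : AEMeasurable G μ)
    (hYG : IndepFun Y G μ) :
    μ.map (fun ω ↦ (Y ω, Y ω + G ω))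
      = ((μ.map Y).prod (μ.map G)).map fun z ↦ (z.1, z.1 + z.2) := by
  rw [← hYG.map_prod_eq_prod_map_map hY hG,
    AEMeasurable.map_map_of_aemeasurable (by fun_prop) (hY.prodMk hG)]
  rfl

variable {κ : Measure E} [κ.IsAddLeftInvariant]

lemma map_prodMk_add_absolutelyContinuous [SFinite κ] (hY : AEMeasurable Y μ)
    (hG : AEMeasurable G μ) (hYG : IndepFun Y G μ) (hGκ : μ.map G ≪ κ) :
    μ.map (fun ω ↦ (Y ω, Y ω + G ω)) ≪ (μ.map Y).prod κ := by
  have hshear := measurePreserving_prod_add (μ.map Y) κ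
  rw [map_prodMk_add_eq_map_prod hY hG hYG, ← hshear.map_eq]
  exact (Measure.AbsolutelyContinuous.rfl.prod hGκ).map hshear.measurable

lemma map_add_absolutelyContinuous [SFinite κ] (hY : AEMeasurable Y μ)
    (hG : AEMeasurable G μ) (hYG : IndepFun Y G μ) (hGκ : μ.map G ≪ κ) :
    μ.map (fun ω ↦ Y ω + G ω) ≪ κ := by
  rw [← Measure.snd_map_prodMk₀ (Y := fun ω ↦ Y ω + G ω) hY]
  exact ((map_prodMk_add_absolutelyContinuous hY hG hYG hGκ).map measurable_snd).trans
    Measure.quasiMeasurePreserving_snd.absolutelyContinuous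

variable [SigmaFinite κ]

lemma map_prodMk_add_absolutelyContinuous_prod_map (hY : AEMeasurable Y μ)
    (hG : AEMeasurable G μ) (hYG : IndepFun Y G μ) (hGκ : μ.map G ≪ κ) :
    μ.map (fun ω ↦ (Y ω, Y ω + G ω)) ≪ (μ.map Y).prod (μ.map fun ω ↦ Y ω + G ω) := by
  have h := absolutelyContinuous_fst_prod_snd
    (map_prodMk_add_absolutelyContinuous hY hG hYG hGκ)
  rwa [Measure.fst_map_prodMk₀ (Y := fun ω ↦ Y ω + G ω) (hY.add hG),
    Measure.snd_map_prodMk₀ (Y := fun ω ↦ Y ω + G ω) hY] at h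

variable [MeasurableNeg E]

lemma llr_map_prodMk_add_prod_ae_eq (hY : AEMeasurable Y μ) (hG : AEMeasurable G μ)
    (hYG : IndepFun Y G μ) (hGκ : μ.map G ≪ κ) :
    ∀ᵐ ω ∂μ, llr (μ.map fun ω ↦ (Y ω, Y ω + G ω)) ((μ.map Y).prod κ) (Y ω, Y ω + G ω)
      = llr (μ.map G) κ (G ω) := by
  have hjoint : μ.map (fun ω ↦ (Y ω, Y ω + G ω))
      = ((μ.map Y).prod (μ.map G)).map (MeasurableEquiv.shearAddRight E) :=
    map_prodMk_add_eq_map_prod hY hG hYG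
  have hshear : ((μ.map Y).prod κ).map (MeasurableEquiv.shearAddRight E) = (μ.map Y).prod κ :=
    (measurePreserving_prod_add (μ.map Y) κ).map_eq
  have hllr := (llr_map_ae_eq (MeasurableEquiv.shearAddRight E).measurableEmbedding
    ((μ.map Y).prod (μ.map G)) ((μ.map Y).prod κ)).trans (llr_prod_right_ae_eq _ hGκ)
  rw [← hjoint, hshear] at hllr
  have hac : μ.map (fun ω ↦ (Y ω, G ω)) ≪ (μ.map Y).prod κ := by
    rw [hYG.map_prod_eq_prod_map_map hY hG]
    exact Measure.AbsolutelyContinuous.rfl.prod hGκ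
  exact ae_of_ae_map (hY.prodMk hG) (hac.ae_le hllr)

lemma llr_map_prodMk_add_ae_eq_sub (hY : AEMeasurable Y μ) (hG : AEMeasurable G μ)
    (hYG : IndepFun Y G μ) (hGκ : μ.map G ≪ κ) :
    ∀ᵐ ω ∂μ, llr (μ.map fun ω ↦ (Y ω, Y ω + G ω))
        ((μ.map Y).prod (μ.map fun ω ↦ Y ω + G ω)) (Y ω, Y ω + G ω)
      = llr (μ.map G) κ (G ω) - llr (μ.map fun ω ↦ Y ω + G ω) κ (Y ω + G ω) := by
  have hYZ : AEMeasurable (fun ω ↦ (Y ω, Y ω + G ω)) μ := hY.prodMk (hY.add hG)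
  have hZκ := map_add_absolutelyContinuous hY hG hYG hGκ
  have hchain := ae_of_ae_map hYZ <| llr_add_llr_ae_eq
    (map_prodMk_add_absolutelyContinuous_prod_map hY hG hYG hGκ)
    (Measure.AbsolutelyContinuous.rfl.prod hZκ)
  have hmarginal := ae_of_ae_map hYZ <|
    (map_prodMk_add_absolutelyContinuous hY hG hYG hGκ).ae_le <|
      llr_prod_right_ae_eq (μ.map Y) hZκ
  filter_upwards [hchain, hmarginal, llr_map_prodMk_add_prod_ae_eq hY hG hYG hGκ]
    with ω hω_chain hω_marginal hω_joint
  rw [← hω_marginal, ← hω_joint, ← hω_chain, add_sub_cancel_right]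

end AdditiveNoise

/-- The differential entropy `h(ν) = -∫ log (dν/dx) dν` of a law on `ℝ`, in nats; it
governs the information carried through an additive noise channel. The value is junk unless
`ν ≪ volume` and the log-density is `ν`-integrable. -/
noncomputable def differentialEntropy (ν : Measure ℝ) : ℝ := -∫ x, llr ν volume x ∂ν

theorem miReal_add_eq_differentialEntropy_sub {Ω : Type*} [MeasurableSpace Ω] {μ : Measure Ω}
    [IsFiniteMeasure μ] {Y G : Ω → ℝ} (hY : AEMeasurable Y μ) (hG : AEMeasurable G μ)
    (hYG : IndepFun Y G μ) (hG_ac : μ.map G ≪ volume)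
    (hG_int : Integrable (llr (μ.map G) volume) (μ.map G))
    (hZ_int : Integrable (llr (μ.map fun ω ↦ Y ω + G ω) volume) (μ.map fun ω ↦ Y ω + G ω)) :
    miReal μ Y (fun ω ↦ Y ω + G ω)
      = ((differentialEntropy (μ.map fun ω ↦ Y ω + G ω)
          - differentialEntropy (μ.map G) : ℝ) : EReal) := by
  have hZ : AEMeasurable (fun ω ↦ Y ω + G ω) μ := hY.add hG
  have hllr := llr_map_prodMk_add_ae_eq_sub hY hG hYG hG_ac
  have hllr_meas : AEStronglyMeasurable
      (llr (μ.map fun ω ↦ (Y ω, Y ω + G ω)) ((μ.map Y).prod (μ.map fun ω ↦ Y ω + G ω)))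
      (μ.map fun ω ↦ (Y ω, Y ω + G ω)) := (stronglyMeasurable_llr _ _).aestronglyMeasurable
  have hG_int' : Integrable (fun ω ↦ llr (μ.map G) volume (G ω)) μ := hG_int.comp_aemeasurable hG
  have hZ_int' : Integrable (fun ω ↦ llr (μ.map fun ω ↦ Y ω + G ω) volume (Y ω + G ω)) μ :=
    hZ_int.comp_aemeasurable hZ
  have hint := (integrable_map_measure hllr_meas (hY.prodMk hZ)).2
    ((hG_int'.sub hZ_int').congr (hllr.mono fun _ h ↦ h.symm))
  rw [miReal, klDiv',
    if_pos ⟨map_prodMk_add_absolutelyContinuous_prod_map hY hG hYG hG_ac, hint⟩,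
    integral_map (hY.prodMk hZ) hllr_meas, integral_congr_ae hllr,
    integral_sub hG_int' hZ_int', differentialEntropy, differentialEntropy,
    integral_map hG hG_int.aestronglyMeasurable, integral_map hZ hZ_int.aestronglyMeasurable,
    neg_sub_neg]

section Gaussian

lemma llr_gaussianReal_volume_ae_eq (m : ℝ) {v : ℝ≥0} (hv : v ≠ 0) :
    llr (gaussianReal m v) volume
      =ᵐ[volume] fun x ↦ -(1 / 2 * Real.log (2 * Real.pi * v)) - (x - m) ^ 2 / (2 * v) := by
  filter_upwards [rnDeriv_gaussianReal m v] with x hx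
  have hpos : 0 < 2 * Real.pi * (v : ℝ) := by positivity
  rw [llr, hx, toReal_gaussianPDF, gaussianPDFReal,
    Real.log_mul (by positivity) (Real.exp_ne_zero _), Real.log_exp, Real.log_inv,
    Real.log_sqrt hpos.le]
  ring

lemma integrable_sub_sq_gaussianReal (m c : ℝ) (v : ℝ≥0) :
    Integrable (fun x ↦ (x - c) ^ 2) (gaussianReal m v) :=
  ((memLp_id_gaussianReal 2).sub (memLp_const c)).integrable_sq

lemma integral_sub_sq_gaussianReal (m : ℝ) (v : ℝ≥0) :
    ∫ x, (x - m) ^ 2 ∂gaussianReal m v = v := by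
  have h := variance_eq_integral (μ := gaussianReal m v) aemeasurable_id
  simpa only [variance_id_gaussianReal, id_eq, integral_id_gaussianReal] using h.symm

lemma integrable_llr_gaussianReal_volume (m : ℝ) {v : ℝ≥0} (hv : v ≠ 0) :
    Integrable (llr (gaussianReal m v) volume) (gaussianReal m v) :=
  ((integrable_const _).sub ((integrable_sub_sq_gaussianReal m m v).div_const _)).congr
    ((gaussianReal_absolutelyContinuous m hv).ae_eq (llr_gaussianReal_volume_ae_eq m hv)).symm

lemma differentialEntropy_gaussianReal (m : ℝ) {v : ℝ≥0} (hv : v ≠ 0) :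
    differentialEntropy (gaussianReal m v)
      = 1 / 2 * Real.log (2 * Real.pi * Real.exp 1 * v) := by
  have hllr := (gaussianReal_absolutelyContinuous m hv).ae_eq (llr_gaussianReal_volume_ae_eq m hv)
  have hlog : Real.log (2 * Real.pi * Real.exp 1 * v) = Real.log (2 * Real.pi * v) + 1 := by
    rw [mul_right_comm, Real.log_mul (by positivity) (Real.exp_ne_zero 1), Real.log_exp]
  rw [differentialEntropy, integral_congr_ae hllr,
    integral_sub (integrable_const _) ((integrable_sub_sq_gaussianReal m m v).div_const _),
    integral_div, integral_sub_sq_gaussianReal, integral_const, probReal_univ, one_smul, hlog]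
  field_simp
  ring

theorem miReal_add_of_hasLaw_gaussianReal {Ω : Type*} [MeasurableSpace Ω] {μ : Measure Ω}
    {Y G : Ω → ℝ} {m m' : ℝ} {a v : ℝ≥0} (hv : v ≠ 0)
    (hY : HasLaw Y (gaussianReal m a) μ) (hG : HasLaw G (gaussianReal m' v) μ)
    (hYG : IndepFun Y G μ) :
    miReal μ Y (fun ω ↦ Y ω + G ω) = ((1 / 2 * Real.log (1 + a / v) : ℝ) : EReal) := by
  have := hY.isFiniteMeasure
  have hav : a + v ≠ 0 := by positivity
  have hZ : μ.map (fun ω ↦ Y ω + G ω) = gaussianReal (m + m') (a + v) :=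
    gaussianReal_add_gaussianReal_of_indepFun hYG hY.map_eq hG.map_eq
  have hratio : 2 * Real.pi * Real.exp 1 * ((a + v : ℝ≥0) : ℝ) / (2 * Real.pi * Real.exp 1 * v)
      = 1 + a / v := by
    push_cast
    field_simp
    ring
  rw [miReal_add_eq_differentialEntropy_sub hY.aemeasurable hG.aemeasurable hYG
      (hG.map_eq ▸ gaussianReal_absolutelyContinuous m' hv)
      (hG.map_eq ▸ integrable_llr_gaussianReal_volume m' hv)
      (hZ ▸ integrable_llr_gaussianReal_volume (m + m') hav),
    hZ, hG.map_eq, differentialEntropy_gaussianReal _ hav, differentialEntropy_gaussianReal _ hv,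
    ← mul_sub, ← Real.log_div (by positivity) (by positivity), hratio]

end Gaussian

lemma integral_sub_const_mul_sq_of_integral_eq_zero {Ω : Type*} [MeasurableSpace Ω]
    {μ : Measure Ω} {X : Ω → ℝ} (hX : AEMeasurable X μ) (hX_mean : ∫ ω, X ω ∂μ = 0) (c : ℝ) :
    ∫ ω, (X ω - c * X ω) ^ 2 ∂μ = (1 - c) ^ 2 * Var[X; μ] := by
  simp_rw [variance_of_integral_eq_zero hX hX_mean, ← one_sub_mul, mul_pow, integral_const_mul]

/-- if `X` is Gaussian with variance `V_X`, `Y = f·X` with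
`f = 1 + √(Δ/V_X)`, and `Z = Y + G` with `G` Gaussian noise of variance `V_N`
independent of `X`, then `E[(X − Y)²] = Δ` and
`I(Y;Z) = (1/2) ln(1 + (√V_X + √Δ)²/V_N)` (in nats). -/
theorem stmt10
    {Ω : Type*} [MeasurableSpace Ω] (μ : Measure Ω) [IsProbabilityMeasure μ]
    (V_X Δ V_N : ℝ) (hVX : 0 < V_X) (hΔ : 0 ≤ Δ) (hVN : 0 < V_N)
    (X G : Ω → ℝ) (hXm : Measurable X) (hGm : Measurable G)
    (hXlaw : μ.map X = gaussianReal 0 V_X.toNNReal)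
    (hGlaw : μ.map G = gaussianReal 0 V_N.toNNReal)
    (hindep : IndepFun X G μ)
    (f : ℝ) (hf : f = 1 + Real.sqrt (Δ / V_X))
    (Y Z : Ω → ℝ) (hY : Y = fun ω => f * X ω) (hZ : Z = fun ω => Y ω + G ω) :
    (∫ ω, (X ω - Y ω) ^ 2 ∂μ = Δ)
    ∧ miReal μ Y Z
        = ((1 / 2 * Real.log (1 + (Real.sqrt V_X + Real.sqrt Δ) ^ 2 / V_N) : ℝ) : EReal) := by
  subst hf hY hZ
  have hX : HasLaw X (gaussianReal 0 V_X.toNNReal) μ := ⟨hXm.aemeasurable, hXlaw⟩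
  have hG : HasLaw G (gaussianReal 0 V_N.toNNReal) μ := ⟨hGm.aemeasurable, hGlaw⟩
  constructor
  · rw [integral_sub_const_mul_sq_of_integral_eq_zero hX.aemeasurable
      (hX.integral_eq.trans integral_id_gaussianReal), hX.variance_eq, variance_id_gaussianReal,
      Real.coe_toNNReal _ hVX.le, sub_add_cancel_left, neg_sq, Real.sq_sqrt (by positivity),
      div_mul_cancel₀ _ hVX.ne']
  · have hscale : (1 + √(Δ / V_X)) ^ 2 * V_X = (√V_X + √Δ) ^ 2 := by
      nth_rw 2 [← Real.sq_sqrt hVX.le]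
      rw [← mul_pow, add_mul, one_mul, Real.sqrt_div hΔ,
        div_mul_cancel₀ _ (Real.sqrt_pos.2 hVX).ne']
    have hYG : IndepFun (fun ω ↦ (1 + √(Δ / V_X)) * X ω) G μ :=
      hindep.comp (measurable_const_mul _) measurable_id
    rw [miReal_add_of_hasLaw_gaussianReal (Real.toNNReal_pos.2 hVN).ne'
      (gaussianReal_const_mul hX _) hG hYG, NNReal.coe_mul, NNReal.coe_mk,
      Real.coe_toNNReal _ hVX.le, Real.coe_toNNReal _ hVN.le, hscale]
end
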